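/- arXiv:1605.06429 — 4 statements merged into one kernel-verified Lean document; each statement's English description precedes it below -/
import Mathlib

section
/- Second-order approximate solution property of the HJBI equation along the candidate strategy and candidate volatility: there exist constants C > 0 and ψ₀ > 0 such that for all (t,s,y) ∈ D and all ψ ∈ (0,ψ₀), |w^ψ_t(t,s,y) + H^ψ(t,s,y; θ^ψ(t,s,y), σ^ψ(t,s,y))| ≤ C ψ³. -/
open Set

/-- The data of the hedging problem with small uncertainty aversion: the constants
`T, K, ε, y_l, y_u`, the reference volatility `σ̄` (`sb`), the reference value `V̄` (`V`)
with its `s`-derivatives `Vs, Vss`, the penalty function `f` with its `ς`-derivatives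
`f1, ..., f4`, the utility `U` with derivatives `U1, U2, U3`, and the correction terms
`w̃` (`wt`) and `ŵ` (`wh`) together with their partial derivatives. -/
structure HedgeData where
  T : ℝ
  K : ℝ
  eps : ℝ
  yl : ℝ
  yu : ℝ
  sb : ℝ → ℝ → ℝ
  V : ℝ → ℝ → ℝ
  Vs : ℝ → ℝ → ℝ
  Vss : ℝ → ℝ → ℝ
  f : ℝ → ℝ → ℝ → ℝ → ℝ
  f1 : ℝ → ℝ → ℝ → ℝ → ℝ
  f2 : ℝ → ℝ → ℝ → ℝ → ℝ
  f3 : ℝ → ℝ → ℝ → ℝ → ℝ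
  f4 : ℝ → ℝ → ℝ → ℝ → ℝ
  U : ℝ → ℝ
  U1 : ℝ → ℝ
  U2 : ℝ → ℝ
  U3 : ℝ → ℝ
  wt : ℝ → ℝ → ℝ → ℝ
  wtT : ℝ → ℝ → ℝ → ℝ
  wtS : ℝ → ℝ → ℝ → ℝ
  wtY : ℝ → ℝ → ℝ → ℝ
  wtSS : ℝ → ℝ → ℝ → ℝ
  wtSY : ℝ → ℝ → ℝ → ℝ
  wtYY : ℝ → ℝ → ℝ → ℝ
  wh : ℝ → ℝ → ℝ → ℝ
  whT : ℝ → ℝ → ℝ → ℝ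
  whS : ℝ → ℝ → ℝ → ℝ
  whY : ℝ → ℝ → ℝ → ℝ
  whSS : ℝ → ℝ → ℝ → ℝ
  whSY : ℝ → ℝ → ℝ → ℝ
  whYY : ℝ → ℝ → ℝ → ℝ

/-- The candidate value function `w^ψ(t,s,y) = U(y) - U'(y) w̃(t,s,y) ψ + U'(y) ŵ(t,s,y) ψ²`. -/
noncomputable def HedgeData.wPsi (d : HedgeData) (ψ t s y : ℝ) : ℝ :=
  d.U y - d.U1 y * d.wt t s y * ψ + d.U1 y * d.wh t s y * ψ ^ 2

/-- Partial derivative `w^ψ_t`. -/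
noncomputable def HedgeData.wPsiT (d : HedgeData) (ψ t s y : ℝ) : ℝ :=
  -(d.U1 y * d.wtT t s y) * ψ + d.U1 y * d.whT t s y * ψ ^ 2

/-- Partial derivative `w^ψ_y`. -/
noncomputable def HedgeData.wPsiY (d : HedgeData) (ψ t s y : ℝ) : ℝ :=
  d.U1 y - (d.U2 y * d.wt t s y + d.U1 y * d.wtY t s y) * ψ
    + (d.U2 y * d.wh t s y + d.U1 y * d.whY t s y) * ψ ^ 2

/-- Partial derivative `w^ψ_ss`. -/
noncomputable def HedgeData.wPsiSS (d : HedgeData) (ψ t s y : ℝ) : ℝ :=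
  -(d.U1 y * d.wtSS t s y) * ψ + d.U1 y * d.whSS t s y * ψ ^ 2

/-- Partial derivative `w^ψ_sy`. -/
noncomputable def HedgeData.wPsiSY (d : HedgeData) (ψ t s y : ℝ) : ℝ :=
  -(d.U2 y * d.wtS t s y + d.U1 y * d.wtSY t s y) * ψ
    + (d.U2 y * d.whS t s y + d.U1 y * d.whSY t s y) * ψ ^ 2

/-- Partial derivative `w^ψ_yy`. -/
noncomputable def HedgeData.wPsiYY (d : HedgeData) (ψ t s y : ℝ) : ℝ :=
  d.U2 y - (d.U3 y * d.wt t s y + 2 * d.U2 y * d.wtY t s y + d.U1 y * d.wtYY t s y) * ψ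
    + (d.U3 y * d.wh t s y + 2 * d.U2 y * d.whY t s y + d.U1 y * d.whYY t s y) * ψ ^ 2

/-- `σ̃(t,s,y) = σ̄(t,s) s² V̄_ss(t,s) / f''(t,s,y;σ̄(t,s))`. -/
noncomputable def HedgeData.sigmaTilde (d : HedgeData) (t s y : ℝ) : ℝ :=
  d.sb t s * s ^ 2 * d.Vss t s / d.f2 t s y (d.sb t s)

/-- `θ̃(t,s,y) = w̃_s(t,s,y) + (U'(y)/U''(y)) w̃_sy(t,s,y)`. -/
noncomputable def HedgeData.thetaTilde (d : HedgeData) (t s y : ℝ) : ℝ :=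
  d.wtS t s y + d.U1 y / d.U2 y * d.wtSY t s y

/-- The candidate volatility `σ^ψ = σ̄ + σ̃ ψ`. -/
noncomputable def HedgeData.sigmaPsi (d : HedgeData) (ψ t s y : ℝ) : ℝ :=
  d.sb t s + d.sigmaTilde t s y * ψ

/-- The candidate strategy `θ^ψ = V̄_s + θ̃ ψ`. -/
noncomputable def HedgeData.thetaPsi (d : HedgeData) (ψ t s y : ℝ) : ℝ :=
  d.Vs t s + d.thetaTilde t s y * ψ

/-- The Hamiltonian `H^ψ(t,s,y;ϑ,ς)`. -/
noncomputable def HedgeData.Ham (d : HedgeData) (ψ t s y ϑ ς : ℝ) : ℝ :=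
  1 / ψ * d.U1 y * d.f t s y ς
    + 1 / 2 * s ^ 2 * d.Vss t s * ((d.sb t s) ^ 2 - ς ^ 2) * d.wPsiY ψ t s y
    + 1 / 2 * ς ^ 2 * s ^ 2 *
      (d.wPsiSS ψ t s y + 2 * (ϑ - d.Vs t s) * d.wPsiSY ψ t s y
        + (ϑ - d.Vs t s) ^ 2 * d.wPsiYY ψ t s y)

/-- The standing assumptions (Assumption 3.1 of the paper). -/
structure HedgeData.Assumptions (d : HedgeData) : Prop where
  hT : 0 < d.T
  hK : 1 < d.K
  heps : 0 < d.eps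
  hy : d.yl < d.yu
  sb_mem : ∀ t ∈ Icc (0:ℝ) d.T, ∀ s ∈ Icc d.K⁻¹ d.K, d.sb t s ∈ Icc (0:ℝ) d.K
  sb_lb : ∀ t ∈ Icc (0:ℝ) d.T, ∀ s ∈ Ioo d.K⁻¹ d.K, d.eps ≤ d.sb t s
  sb_ub : ∀ t ∈ Icc (0:ℝ) d.T, ∀ s ∈ Ioo d.K⁻¹ d.K, d.sb t s ≤ d.K - d.eps
  sb_bdry : ∀ t ∈ Icc (0:ℝ) d.T, d.sb t d.K⁻¹ = 0 ∧ d.sb t d.K = 0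
  V_derivS : ∀ t ∈ Ioo (0:ℝ) d.T, ∀ s ∈ Ioo d.K⁻¹ d.K, HasDerivAt (d.V t) (d.Vs t s) s
  V_derivSS : ∀ t ∈ Ioo (0:ℝ) d.T, ∀ s ∈ Ioo d.K⁻¹ d.K, HasDerivAt (d.Vs t) (d.Vss t s) s
  Vss_cont : ∀ t ∈ Ioo (0:ℝ) d.T, ContinuousOn (d.Vss t) (Ioo d.K⁻¹ d.K)
  Vss_bdd : ∀ t ∈ Ioo (0:ℝ) d.T, ∀ s ∈ Ioo d.K⁻¹ d.K, |s ^ 2 * d.Vss t s| ≤ d.K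
  f_deriv1 : ∀ t s y ς : ℝ, HasDerivAt (d.f t s y) (d.f1 t s y ς) ς
  f_deriv2 : ∀ t s y ς : ℝ, HasDerivAt (d.f1 t s y) (d.f2 t s y ς) ς
  f_deriv3 : ∀ t s y ς : ℝ, HasDerivAt (d.f2 t s y) (d.f3 t s y ς) ς
  f_deriv4 : ∀ t s y ς : ℝ, HasDerivAt (d.f3 t s y) (d.f4 t s y ς) ς
  f4_cont : ∀ t s y : ℝ, Continuous (d.f4 t s y)
  f_nonneg : ∀ t s y ς : ℝ, 0 ≤ ς → 0 ≤ d.f t s y ς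
  f_min : ∀ t ∈ Ioo (0:ℝ) d.T, ∀ s ∈ Ioo d.K⁻¹ d.K, ∀ y ∈ Ioo d.yl d.yu,
    d.f t s y (d.sb t s) = 0 ∧ d.f1 t s y (d.sb t s) = 0
  f2_bdd : ∀ t ∈ Ioo (0:ℝ) d.T, ∀ s ∈ Ioo d.K⁻¹ d.K, ∀ y ∈ Ioo d.yl d.yu,
    ∀ ς ∈ Icc (0:ℝ) d.K, 1 / d.K ≤ d.f2 t s y ς ∧ d.f2 t s y ς ≤ d.K
  f34_bdd : ∀ t ∈ Ioo (0:ℝ) d.T, ∀ s ∈ Ioo d.K⁻¹ d.K, ∀ y ∈ Ioo d.yl d.yu,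
    ∀ ς ∈ Icc (0:ℝ) d.K, |d.f3 t s y ς| ≤ d.K ∧ |d.f4 t s y ς| ≤ d.K
  U_deriv1 : ∀ y : ℝ, HasDerivAt d.U (d.U1 y) y
  U_deriv2 : ∀ y : ℝ, HasDerivAt d.U1 (d.U2 y) y
  U_deriv3 : ∀ y : ℝ, HasDerivAt d.U2 (d.U3 y) y
  U3_cont : Continuous d.U3
  U1_pos : ∀ y : ℝ, 0 < d.U1 y
  U2_neg : ∀ y : ℝ, d.U2 y < 0
  wt_cont : ContinuousOn (fun p : ℝ × ℝ × ℝ => d.wt p.1 p.2.1 p.2.2)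
    (Icc 0 d.T ×ˢ Icc d.K⁻¹ d.K ×ˢ Icc d.yl d.yu)
  wh_cont : ContinuousOn (fun p : ℝ × ℝ × ℝ => d.wh p.1 p.2.1 p.2.2)
    (Icc 0 d.T ×ˢ Icc d.K⁻¹ d.K ×ˢ Icc d.yl d.yu)
  wt_deriv : ∀ t ∈ Ioo (0:ℝ) d.T, ∀ s ∈ Ioo d.K⁻¹ d.K, ∀ y ∈ Ioo d.yl d.yu,
    HasDerivAt (fun t' => d.wt t' s y) (d.wtT t s y) t ∧
    HasDerivAt (fun s' => d.wt t s' y) (d.wtS t s y) s ∧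
    HasDerivAt (fun y' => d.wt t s y') (d.wtY t s y) y ∧
    HasDerivAt (fun s' => d.wtS t s' y) (d.wtSS t s y) s ∧
    HasDerivAt (fun y' => d.wtS t s y') (d.wtSY t s y) y ∧
    HasDerivAt (fun y' => d.wtY t s y') (d.wtYY t s y) y
  wh_deriv : ∀ t ∈ Ioo (0:ℝ) d.T, ∀ s ∈ Ioo d.K⁻¹ d.K, ∀ y ∈ Ioo d.yl d.yu,
    HasDerivAt (fun t' => d.wh t' s y) (d.whT t s y) t ∧
    HasDerivAt (fun s' => d.wh t s' y) (d.whS t s y) s ∧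
    HasDerivAt (fun y' => d.wh t s y') (d.whY t s y) y ∧
    HasDerivAt (fun s' => d.whS t s' y) (d.whSS t s y) s ∧
    HasDerivAt (fun y' => d.whS t s y') (d.whSY t s y) y ∧
    HasDerivAt (fun y' => d.whY t s y') (d.whYY t s y) y
  wt_deriv_cont : ∀ g ∈ [d.wtT, d.wtS, d.wtY, d.wtSS, d.wtSY, d.wtYY],
    ContinuousOn (fun p : ℝ × ℝ × ℝ => g p.1 p.2.1 p.2.2)
      (Ioo 0 d.T ×ˢ Ioo d.K⁻¹ d.K ×ˢ Ioo d.yl d.yu)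
  wh_deriv_cont : ∀ g ∈ [d.whT, d.whS, d.whY, d.whSS, d.whSY, d.whYY],
    ContinuousOn (fun p : ℝ × ℝ × ℝ => g p.1 p.2.1 p.2.2)
      (Ioo 0 d.T ×ˢ Ioo d.K⁻¹ d.K ×ˢ Ioo d.yl d.yu)
  wt_bdd : ∀ g ∈ [d.wtT, d.wtS, d.wtY, d.wtSS, d.wtSY, d.wtYY],
    ∀ t ∈ Ioo (0:ℝ) d.T, ∀ s ∈ Ioo d.K⁻¹ d.K, ∀ y ∈ Ioo d.yl d.yu, |g t s y| ≤ d.K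
  wh_bdd : ∀ g ∈ [d.whT, d.whS, d.whY, d.whSS, d.whSY, d.whYY],
    ∀ t ∈ Ioo (0:ℝ) d.T, ∀ s ∈ Ioo d.K⁻¹ d.K, ∀ y ∈ Ioo d.yl d.yu, |g t s y| ≤ d.K

/-- The PDEs (with source terms `g̃` and `ĝ`) and terminal/boundary conditions
satisfied by the correction terms `w̃` and `ŵ`. -/
structure HedgeData.PDEAssumptions (d : HedgeData) : Prop where
  pde_wt : ∀ t ∈ Ioo (0:ℝ) d.T, ∀ s ∈ Ioo d.K⁻¹ d.K, ∀ y ∈ Ioo d.yl d.yu,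
    d.wtT t s y + 1 / 2 * (d.sb t s) ^ 2 * s ^ 2 * d.wtSS t s y
      + (d.sb t s * s ^ 2 * d.Vss t s) ^ 2 / (2 * d.f2 t s y (d.sb t s)) = 0
  pde_wh : ∀ t ∈ Ioo (0:ℝ) d.T, ∀ s ∈ Ioo d.K⁻¹ d.K, ∀ y ∈ Ioo d.yl d.yu,
    d.whT t s y + 1 / 2 * (d.sb t s) ^ 2 * s ^ 2 * d.whSS t s y
      + (1 / 6 * d.sigmaTilde t s y ^ 3 * d.f3 t s y (d.sb t s)
        - 1 / 2 * d.sigmaTilde t s y ^ 2 * s ^ 2 * d.Vss t s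
        + d.sigmaTilde t s y * d.sb t s * s ^ 2
            * (d.Vss t s * d.wtY t s y - d.wtSS t s y)
        - d.U2 y / d.U1 y * (1 / 2 * (d.sb t s) ^ 2 * s ^ 2 * d.thetaTilde t s y ^ 2
            - d.sigmaTilde t s y ^ 2 * d.f2 t s y (d.sb t s) * d.wt t s y)) = 0
  bc_T : ∀ s ∈ Ioo d.K⁻¹ d.K, ∀ y ∈ Ioo d.yl d.yu, d.wt d.T s y = 0 ∧ d.wh d.T s y = 0
  bc_S : ∀ t ∈ Ioo (0:ℝ) d.T, ∀ y ∈ Ioo d.yl d.yu,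
    d.wt t d.K⁻¹ y = 0 ∧ d.wt t d.K y = 0 ∧ d.wh t d.K⁻¹ y = 0 ∧ d.wh t d.K y = 0

lemma mvt_step {g g' : ℝ → ℝ} {a C L : ℝ} {n : ℕ} (hC : 0 ≤ C) (ha : a ∈ Icc 0 L)
    (hg : ∀ z, HasDerivAt g (g' z) z) (h0 : g a = 0)
    (hb : ∀ z ∈ Icc 0 L, |g' z| ≤ C * |z - a| ^ n) :
    ∀ z ∈ Icc 0 L, |g z| ≤ C * |z - a| ^ (n + 1) := by
  intro z hz
  have hsub : uIcc a z ⊆ Icc 0 L := Set.OrdConnected.uIcc_subset inferInstance ha hz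
  have key := (convex_uIcc a z).norm_image_sub_le_of_norm_hasDerivWithin_le
    (f := g) (f' := g') (C := C * |z - a| ^ n) (x := a) (y := z)
    (fun u _ => (hg u).hasDerivWithinAt)
    (fun u hu => by
      rw [Real.norm_eq_abs]
      refine (hb u (hsub hu)).trans ?_
      have := abs_sub_left_of_mem_uIcc hu
      gcongr) left_mem_uIcc right_mem_uIcc
  simp only [Real.norm_eq_abs, h0, sub_zero] at key
  rw [pow_succ, ← mul_assoc]
  exact key

lemma taylor_bound {f f1 f2 f3 f4 : ℝ → ℝ} {a C L : ℝ} (hC : 0 ≤ C) (ha : a ∈ Icc 0 L)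
    (h1 : ∀ z, HasDerivAt f (f1 z) z) (h2 : ∀ z, HasDerivAt f1 (f2 z) z)
    (h3 : ∀ z, HasDerivAt f2 (f3 z) z) (h4 : ∀ z, HasDerivAt f3 (f4 z) z)
    (hf : f a = 0) (hf1 : f1 a = 0) (hb : ∀ z ∈ Icc 0 L, |f4 z| ≤ C) :
    ∀ z ∈ Icc 0 L,
      |f z - (1 / 2 * f2 a * (z - a) ^ 2 + 1 / 6 * f3 a * (z - a) ^ 3)| ≤ C * |z - a| ^ 4 := by
  have hid : ∀ z : ℝ, HasDerivAt (fun z : ℝ => z - a) 1 z := fun z => (hasDerivAt_id z).sub_const a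
  have s3 := mvt_step (g := fun z => f3 z - f3 a) (g' := f4) (n := 0) hC ha
    (fun z => (h4 z).sub_const _) (by simp) (by simpa using hb)
  have s2 := mvt_step (g := fun z => f2 z - f2 a - f3 a * (z - a))
    (g' := fun z => f3 z - f3 a) hC ha
    (fun z => by
      exact (((h3 z).sub_const (f2 a)).sub ((hid z).const_mul (f3 a))).congr_deriv (by ring)) (by simp) s3
  have s1 := mvt_step (g := fun z => f1 z - (f2 a * (z - a) + 1 / 2 * f3 a * (z - a) ^ 2))
    (g' := fun z => f2 z - f2 a - f3 a * (z - a)) hC ha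
    (fun z => by
      exact ((h2 z).sub (((hid z).const_mul (f2 a)).add
        (((hid z).pow 2).const_mul (1 / 2 * f3 a)))).congr_deriv (by push_cast; ring)) (by simp [hf1]) s2
  have s0 := mvt_step
    (g := fun z => f z - (1 / 2 * f2 a * (z - a) ^ 2 + 1 / 6 * f3 a * (z - a) ^ 3))
    (g' := fun z => f1 z - (f2 a * (z - a) + 1 / 2 * f3 a * (z - a) ^ 2)) hC ha
    (fun z => by
      exact ((h1 z).sub ((((hid z).pow 2).const_mul (1 / 2 * f2 a)).add
        (((hid z).pow 3).const_mul (1 / 6 * f3 a)))).congr_deriv (by push_cast; ring)) (by simp [hf]) s1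
  simpa using s0

/-- Uniform boundedness on a set. -/
def Bd {α : Type} (S : Set α) (g : α → ℝ) : Prop := ∃ C, ∀ p ∈ S, |g p| ≤ C

lemma Bd.add {α : Type} {S : Set α} {g h : α → ℝ} (hg : Bd S g) (hh : Bd S h) :
    Bd S (fun p => g p + h p) := by
  obtain ⟨C, hC⟩ := hg
  obtain ⟨D, hD⟩ := hh
  exact ⟨C + D, fun p hp => (abs_add_le _ _).trans (add_le_add (hC p hp) (hD p hp))⟩

lemma Bd.neg {α : Type} {S : Set α} {g : α → ℝ} (hg : Bd S g) : Bd S (fun p => - g p) := by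
  obtain ⟨C, hC⟩ := hg
  exact ⟨C, fun p hp => by rw [abs_neg]; exact hC p hp⟩

lemma Bd.sub {α : Type} {S : Set α} {g h : α → ℝ} (hg : Bd S g) (hh : Bd S h) :
    Bd S (fun p => g p - h p) := by
  simpa only [sub_eq_add_neg] using hg.add hh.neg

lemma Bd.mul {α : Type} {S : Set α} {g h : α → ℝ} (hg : Bd S g) (hh : Bd S h) :
    Bd S (fun p => g p * h p) := by
  obtain ⟨C, hC⟩ := hg
  obtain ⟨D, hD⟩ := hh
  exact ⟨C * D, fun p hp => by
    rw [abs_mul]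
    exact mul_le_mul (hC p hp) (hD p hp) (abs_nonneg _) ((abs_nonneg _).trans (hC p hp))⟩

lemma Bd.const {α : Type} {S : Set α} (c : ℝ) : Bd S (fun _ => c) := ⟨|c|, fun _ _ => le_rfl⟩

lemma Bd.pow {α : Type} {S : Set α} {g : α → ℝ} (hg : Bd S g) (n : ℕ) :
    Bd S (fun p => g p ^ n) := by
  obtain ⟨C, hC⟩ := hg
  exact ⟨C ^ n, fun p hp => by rw [abs_pow]; exact pow_le_pow_left₀ (abs_nonneg _) (hC p hp) n⟩

/-- The cubic remainder coefficient. -/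
noncomputable def remP (a σ s c θ ψ u1 u2 u3 w wY wSS wYY h hY hSS hS hSY hYY : ℝ) : ℝ :=
  -(1 / 2 * a * (2 * σ * c * (u2 * h + u1 * hY) - c ^ 2 * (u2 * w + u1 * wY)
      + c ^ 2 * (u2 * h + u1 * hY) * ψ))
  + 1 / 2 * s ^ 2 *
    (σ ^ 2 * ((2 * θ * (u2 * hS + u1 * hSY) - θ ^ 2 * (u3 * w + 2 * u2 * wY + u1 * wYY))
        + θ ^ 2 * (u3 * h + 2 * u2 * hY + u1 * hYY) * ψ)
    + 2 * σ * c * ((u1 * hSS - θ ^ 2 * u2)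
        + (2 * θ * (u2 * hS + u1 * hSY) - θ ^ 2 * (u3 * w + 2 * u2 * wY + u1 * wYY)) * ψ
        + θ ^ 2 * (u3 * h + 2 * u2 * hY + u1 * hYY) * ψ ^ 2)
    + c ^ 2 * (-(u1 * wSS) + (u1 * hSS - θ ^ 2 * u2) * ψ
        + (2 * θ * (u2 * hS + u1 * hSY) - θ ^ 2 * (u3 * w + 2 * u2 * wY + u1 * wYY)) * ψ ^ 2
        + θ ^ 2 * (u3 * h + 2 * u2 * hY + u1 * hYY) * ψ ^ 3))

lemma alg_id (σ s v c θ ψ u1 u2 u3 w wT wS wY wSS wSY wYY h hT hY hSS hS hSY hYY F q k r : ℝ)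
    (hψ : ψ ≠ 0) (hu1 : u1 ≠ 0) (hu2 : u2 ≠ 0) (hq : q ≠ 0)
    (hc : c = σ * s ^ 2 * v / q) (hθ : θ = wS + u1 / u2 * wSY)
    (hr : r = (F - (1 / 2 * q * (c * ψ) ^ 2 + 1 / 6 * k * (c * ψ) ^ 3)) / ψ ^ 4)
    (p1 : wT + 1 / 2 * σ ^ 2 * s ^ 2 * wSS + (σ * s ^ 2 * v) ^ 2 / (2 * q) = 0)
    (p2 : hT + 1 / 2 * σ ^ 2 * s ^ 2 * hSS
      + (1 / 6 * c ^ 3 * k - 1 / 2 * c ^ 2 * s ^ 2 * v + c * σ * s ^ 2 * (v * wY - wSS)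
        - u2 / u1 * (1 / 2 * σ ^ 2 * s ^ 2 * θ ^ 2 - c ^ 2 * q * w)) = 0) :
    (-(u1 * wT) * ψ + u1 * hT * ψ ^ 2) +
    (1 / ψ * u1 * F + 1 / 2 * s ^ 2 * v * (σ ^ 2 - (σ + c * ψ) ^ 2) *
        (u1 - (u2 * w + u1 * wY) * ψ + (u2 * h + u1 * hY) * ψ ^ 2)
      + 1 / 2 * (σ + c * ψ) ^ 2 * s ^ 2 *
        ((-(u1 * wSS) * ψ + u1 * hSS * ψ ^ 2)
          + 2 * (θ * ψ) * (-(u2 * wS + u1 * wSY) * ψ + (u2 * hS + u1 * hSY) * ψ ^ 2)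
          + (θ * ψ) ^ 2 * (u2 - (u3 * w + 2 * u2 * wY + u1 * wYY) * ψ
            + (u3 * h + 2 * u2 * hY + u1 * hYY) * ψ ^ 2)))
    = (u1 * r + remP (s ^ 2 * v) σ s c θ ψ u1 u2 u3 w wY wSS wYY h hY hSS hS hSY hYY) * ψ ^ 3 := by
  have e1 : σ * s ^ 2 * v = q * c := by rw [hc]; field_simp
  have e2 : u2 * wS + u1 * wSY = u2 * θ := by rw [hθ]; field_simp
  have e3 : 1 / ψ * u1 * F = u1 * (r * ψ ^ 3 + 1 / 2 * q * c ^ 2 * ψ + 1 / 6 * k * c ^ 3 * ψ ^ 2) := by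
    rw [hr]; field_simp; ring
  have p1' : wT + 1 / 2 * σ ^ 2 * s ^ 2 * wSS + 1 / 2 * q * c ^ 2 = 0 := by
    rw [e1] at p1
    rw [← p1]; field_simp
  have p2' : u1 * (hT + 1 / 2 * σ ^ 2 * s ^ 2 * hSS + 1 / 6 * c ^ 3 * k - 1 / 2 * c ^ 2 * s ^ 2 * v
      + c * σ * s ^ 2 * (v * wY - wSS))
        - u2 * (1 / 2 * σ ^ 2 * s ^ 2 * θ ^ 2 - c ^ 2 * q * w) = 0 := by
    have := congrArg (u1 * ·) p2
    simp only [mul_zero] at this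
    rw [← this]; field_simp; ring
  rw [e2, e3]
  unfold remP
  linear_combination (-(u1 * ψ)) * p1' + ψ ^ 2 * p2' +
    (-c * u1 * ψ + c * u2 * w * ψ ^ 2) * e1

lemma bd_of_cont {g : ℝ → ℝ} (hg : Continuous g) (a b : ℝ) : ∃ C, ∀ y ∈ Ioo a b, |g y| ≤ C := by
  obtain ⟨C, hC⟩ := isCompact_Icc.exists_bound_of_continuousOn (s := Icc a b) hg.continuousOn
  exact ⟨C, fun y hy => hC y (Ioo_subset_Icc_self hy)⟩

/-- **Second-order approximate solution property of the HJBI equation along the candidate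
strategy and candidate volatility:** there are `C > 0` and `ψ₀ > 0` such that for all
`(t,s,y) ∈ D` and `ψ ∈ (0,ψ₀)`,
`|w^ψ_t + H^ψ(t,s,y; θ^ψ(t,s,y), σ^ψ(t,s,y))| ≤ C ψ³`. -/
theorem hjbi_second_order (d : HedgeData) (hd : d.Assumptions) (hpde : d.PDEAssumptions) :
    ∃ C > (0:ℝ), ∃ ψ₀ > (0:ℝ),
      ∀ t ∈ Ioo (0:ℝ) d.T, ∀ s ∈ Ioo d.K⁻¹ d.K, ∀ y ∈ Ioo d.yl d.yu, ∀ ψ ∈ Ioo (0:ℝ) ψ₀,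
        |d.wPsiT ψ t s y + d.Ham ψ t s y (d.thetaPsi ψ t s y) (d.sigmaPsi ψ t s y)|
          ≤ C * ψ ^ 3 := by
  have hK0 : 0 < d.K := zero_lt_one.trans hd.hK
  have hK3 : 0 < d.K ^ 3 := by positivity
  have hε := hd.heps
  set ψ₀ : ℝ := min 1 (d.eps / d.K ^ 3) with hψ₀
  have hψ₀pos : 0 < ψ₀ := lt_min one_pos (by positivity)
  -- the bound on sigma tilde
  have hsub : ∀ t ∈ Ioo (0:ℝ) d.T, t ∈ Icc (0:ℝ) d.T := fun t ht => Ioo_subset_Icc_self ht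
  have hσ : ∀ t ∈ Ioo (0:ℝ) d.T, ∀ s ∈ Ioo d.K⁻¹ d.K, d.sb t s ∈ Icc (0:ℝ) d.K := fun t ht s hs =>
    hd.sb_mem t (hsub t ht) s (Ioo_subset_Icc_self hs)
  have hq : ∀ t ∈ Ioo (0:ℝ) d.T, ∀ s ∈ Ioo d.K⁻¹ d.K, ∀ y ∈ Ioo d.yl d.yu,
      1 / d.K ≤ d.f2 t s y (d.sb t s) := fun t ht s hs y hy =>
    (hd.f2_bdd t ht s hs y hy _ (hσ t ht s hs)).1
  have hq0 : ∀ t ∈ Ioo (0:ℝ) d.T, ∀ s ∈ Ioo d.K⁻¹ d.K, ∀ y ∈ Ioo d.yl d.yu,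
      0 < d.f2 t s y (d.sb t s) := fun t ht s hs y hy =>
    lt_of_lt_of_le (by positivity) (hq t ht s hs y hy)
  have hc : ∀ t ∈ Ioo (0:ℝ) d.T, ∀ s ∈ Ioo d.K⁻¹ d.K, ∀ y ∈ Ioo d.yl d.yu,
      |d.sigmaTilde t s y| ≤ d.K ^ 3 := by
    intro t ht s hs y hy
    have h0 := hq0 t ht s hs y hy
    unfold HedgeData.sigmaTilde
    rw [abs_div, abs_of_pos h0, div_le_iff₀ h0, mul_assoc, abs_mul]
    have h1 : |d.sb t s| ≤ d.K := by
      rw [abs_of_nonneg (hσ t ht s hs).1]; exact (hσ t ht s hs).2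
    calc |d.sb t s| * |s ^ 2 * d.Vss t s| ≤ d.K * d.K :=
          mul_le_mul h1 (hd.Vss_bdd t ht s hs) (abs_nonneg _) hK0.le
      _ = d.K ^ 3 * (1 / d.K) := by field_simp
      _ ≤ _ := mul_le_mul_of_nonneg_left (hq t ht s hs y hy) hK3.le
  -- the Taylor remainder
  have hR : ∀ t ∈ Ioo (0:ℝ) d.T, ∀ s ∈ Ioo d.K⁻¹ d.K, ∀ y ∈ Ioo d.yl d.yu, ∀ ψ ∈ Ioo (0:ℝ) ψ₀,
      |(d.f t s y (d.sigmaPsi ψ t s y) - (1 / 2 * d.f2 t s y (d.sb t s)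
        * (d.sigmaTilde t s y * ψ) ^ 2 + 1 / 6 * d.f3 t s y (d.sb t s)
        * (d.sigmaTilde t s y * ψ) ^ 3)) / ψ ^ 4| ≤ d.K * (d.K ^ 3) ^ 4 := by
    intro t ht s hs y hy ψ hψ
    have hψ4 : 0 < ψ ^ 4 := pow_pos hψ.1 4
    have hx : |d.sigmaTilde t s y * ψ| ≤ d.eps := by
      rw [abs_mul, abs_of_pos hψ.1]
      calc |d.sigmaTilde t s y| * ψ ≤ d.K ^ 3 * (d.eps / d.K ^ 3) :=
            mul_le_mul (hc t ht s hs y hy) (hψ.2.le.trans (min_le_right _ _)) hψ.1.le hK3.le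
        _ = d.eps := by field_simp
    have hx' := abs_le.1 hx
    have hmem : d.sigmaPsi ψ t s y ∈ Icc (0:ℝ) d.K := by
      have h1 := hd.sb_lb t (hsub t ht) s hs
      have h2 := hd.sb_ub t (hsub t ht) s hs
      unfold HedgeData.sigmaPsi
      constructor <;> linarith
    have := taylor_bound hK0.le (hσ t ht s hs) (hd.f_deriv1 t s y) (hd.f_deriv2 t s y)
      (hd.f_deriv3 t s y) (hd.f_deriv4 t s y) (hd.f_min t ht s hs y hy).1
      (hd.f_min t ht s hs y hy).2 (fun z hz => (hd.f34_bdd t ht s hs y hy z hz).2) _ hmem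
    have e : d.sigmaPsi ψ t s y - d.sb t s = d.sigmaTilde t s y * ψ := by
      unfold HedgeData.sigmaPsi; ring
    rw [e] at this
    rw [abs_div, abs_of_pos hψ4, div_le_iff₀ hψ4]
    refine this.trans ?_
    rw [abs_mul, abs_of_pos hψ.1, mul_pow, ← mul_assoc]
    have := hc t ht s hs y hy
    gcongr
  -- continuity of the utility derivatives
  have cU1 : Continuous d.U1 := continuous_iff_continuousAt.2 fun y => (hd.U_deriv2 y).continuousAt
  have cU2 : Continuous d.U2 := continuous_iff_continuousAt.2 fun y => (hd.U_deriv3 y).continuousAt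
  have cU12 : Continuous (fun y => d.U1 y / d.U2 y) := cU1.div cU2 fun y => (hd.U2_neg y).ne
  -- bounded quantities
  let S : Set (ℝ × ℝ × ℝ × ℝ) :=
    {p | p.1 ∈ Ioo (0:ℝ) d.T ∧ p.2.1 ∈ Ioo d.K⁻¹ d.K ∧ p.2.2.1 ∈ Ioo d.yl d.yu ∧
      p.2.2.2 ∈ Ioo (0:ℝ) ψ₀}
  have ofY : ∀ g : ℝ → ℝ, Continuous g → Bd S (fun p => g p.2.2.1) := fun g hg => by
    obtain ⟨C, hC⟩ := bd_of_cont hg d.yl d.yu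
    exact ⟨C, fun p hp => hC _ hp.2.2.1⟩
  have bU1 := ofY _ cU1
  have bU2 := ofY _ cU2
  have bU3 := ofY _ hd.U3_cont
  have bU12 := ofY _ cU12
  have bψ : Bd S (fun p => p.2.2.2) := ⟨ψ₀, fun p hp => by
    rw [abs_of_pos hp.2.2.2.1]; exact hp.2.2.2.2.le⟩
  have bs : Bd S (fun p => p.2.1) := ⟨d.K, fun p hp => by
    rw [abs_of_pos (lt_trans (inv_pos.2 hK0) hp.2.1.1)]; exact hp.2.1.2.le⟩
  have bσ : Bd S (fun p => d.sb p.1 p.2.1) := ⟨d.K, fun p hp => by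
    have := hσ _ hp.1 _ hp.2.1
    rw [abs_of_nonneg this.1]; exact this.2⟩
  have ba : Bd S (fun p => p.2.1 ^ 2 * d.Vss p.1 p.2.1) :=
    ⟨d.K, fun p hp => hd.Vss_bdd _ hp.1 _ hp.2.1⟩
  have bc : Bd S (fun p => d.sigmaTilde p.1 p.2.1 p.2.2.1) :=
    ⟨d.K ^ 3, fun p hp => hc _ hp.1 _ hp.2.1 _ hp.2.2.1⟩
  have bR : Bd S (fun p => (d.f p.1 p.2.1 p.2.2.1 (d.sigmaPsi p.2.2.2 p.1 p.2.1 p.2.2.1)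
      - (1 / 2 * d.f2 p.1 p.2.1 p.2.2.1 (d.sb p.1 p.2.1)
        * (d.sigmaTilde p.1 p.2.1 p.2.2.1 * p.2.2.2) ^ 2
        + 1 / 6 * d.f3 p.1 p.2.1 p.2.2.1 (d.sb p.1 p.2.1)
        * (d.sigmaTilde p.1 p.2.1 p.2.2.1 * p.2.2.2) ^ 3)) / p.2.2.2 ^ 4) :=
    ⟨_, fun p hp => hR _ hp.1 _ hp.2.1 _ hp.2.2.1 _ hp.2.2.2⟩
  have ofC : ∀ g : ℝ → ℝ → ℝ → ℝ, ContinuousOn (fun p : ℝ × ℝ × ℝ => g p.1 p.2.1 p.2.2)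
      (Icc 0 d.T ×ˢ Icc d.K⁻¹ d.K ×ˢ Icc d.yl d.yu) →
      Bd S (fun p => g p.1 p.2.1 p.2.2.1) := fun g hg => by
    obtain ⟨C, hC⟩ := (isCompact_Icc.prod
      (isCompact_Icc.prod isCompact_Icc)).exists_bound_of_continuousOn hg
    exact ⟨C, fun p hp => hC (p.1, p.2.1, p.2.2.1) ⟨Ioo_subset_Icc_self hp.1,
      Ioo_subset_Icc_self hp.2.1, Ioo_subset_Icc_self hp.2.2.1⟩⟩
  have bw := ofC _ hd.wt_cont
  have bh := ofC _ hd.wh_cont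
  have ofT : ∀ g ∈ [d.wtT, d.wtS, d.wtY, d.wtSS, d.wtSY, d.wtYY],
      Bd S (fun p => g p.1 p.2.1 p.2.2.1) := fun g hg =>
    ⟨d.K, fun p hp => hd.wt_bdd g hg _ hp.1 _ hp.2.1 _ hp.2.2.1⟩
  have ofH : ∀ g ∈ [d.whT, d.whS, d.whY, d.whSS, d.whSY, d.whYY],
      Bd S (fun p => g p.1 p.2.1 p.2.2.1) := fun g hg =>
    ⟨d.K, fun p hp => hd.wh_bdd g hg _ hp.1 _ hp.2.1 _ hp.2.2.1⟩
  have bwS := ofT d.wtS (by simp)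
  have bwY := ofT d.wtY (by simp)
  have bwSS := ofT d.wtSS (by simp)
  have bwSY := ofT d.wtSY (by simp)
  have bwYY := ofT d.wtYY (by simp)
  have bhS := ofH d.whS (by simp)
  have bhY := ofH d.whY (by simp)
  have bhSS := ofH d.whSS (by simp)
  have bhSY := ofH d.whSY (by simp)
  have bhYY := ofH d.whYY (by simp)
  have bθ : Bd S (fun p => d.thetaTilde p.1 p.2.1 p.2.2.1) := bwS.add (bU12.mul bwSY)
  have bP : Bd S (fun p => remP (p.2.1 ^ 2 * d.Vss p.1 p.2.1) (d.sb p.1 p.2.1) p.2.1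
      (d.sigmaTilde p.1 p.2.1 p.2.2.1) (d.thetaTilde p.1 p.2.1 p.2.2.1) p.2.2.2
      (d.U1 p.2.2.1) (d.U2 p.2.2.1) (d.U3 p.2.2.1)
      (d.wt p.1 p.2.1 p.2.2.1) (d.wtY p.1 p.2.1 p.2.2.1) (d.wtSS p.1 p.2.1 p.2.2.1)
      (d.wtYY p.1 p.2.1 p.2.2.1) (d.wh p.1 p.2.1 p.2.2.1) (d.whY p.1 p.2.1 p.2.2.1)
      (d.whSS p.1 p.2.1 p.2.2.1) (d.whS p.1 p.2.1 p.2.2.1) (d.whSY p.1 p.2.1 p.2.2.1)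
      (d.whYY p.1 p.2.1 p.2.2.1)) := by
    unfold remP
    repeat' first
      | assumption
      | exact Bd.const _
      | apply Bd.add
      | apply Bd.sub
      | apply Bd.neg
      | apply Bd.mul
      | apply Bd.pow
  obtain ⟨C, hC⟩ := (bU1.mul bR).add bP
  refine ⟨max C 1, lt_max_of_lt_right one_pos, ψ₀, hψ₀pos, ?_⟩
  intro t ht s hs y hy ψ hψ
  have hb := hC (t, s, y, ψ) ⟨ht, hs, hy, hψ⟩
  have key := alg_id (d.sb t s) s (d.Vss t s) (d.sigmaTilde t s y) (d.thetaTilde t s y) ψ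
    (d.U1 y) (d.U2 y) (d.U3 y) (d.wt t s y) (d.wtT t s y) (d.wtS t s y) (d.wtY t s y)
    (d.wtSS t s y) (d.wtSY t s y) (d.wtYY t s y) (d.wh t s y) (d.whT t s y) (d.whY t s y)
    (d.whSS t s y) (d.whS t s y) (d.whSY t s y) (d.whYY t s y)
    (d.f t s y (d.sigmaPsi ψ t s y)) (d.f2 t s y (d.sb t s)) (d.f3 t s y (d.sb t s)) _
    hψ.1.ne' (hd.U1_pos y).ne' (hd.U2_neg y).ne (hq0 t ht s hs y hy).ne' rfl rfl rfl
    (hpde.pde_wt t ht s hs y hy) (hpde.pde_wh t ht s hs y hy)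
  have e1 : d.thetaPsi ψ t s y - d.Vs t s = d.thetaTilde t s y * ψ := by
    unfold HedgeData.thetaPsi; ring
  unfold HedgeData.Ham
  rw [e1]
  refine le_of_eq_of_le (congrArg abs key) ?_
  rw [abs_mul, abs_of_pos (pow_pos hψ.1 3)]
  exact mul_le_mul_of_nonneg_right (hb.trans (le_max_left _ _)) (pow_pos hψ.1 3).le
end

section
/- Uniform derivative bounds for implicitly defined functions: there exists a constant M̃ > 0 such that for all λ ∈ Λ and all x ∈ U, |y_λ'(x)| ≤ M̃ (1 + M₁ |y_λ(x)|) and |y_λ''(x)| ≤ M̃ (1 + M₁ |y_λ(x)| + M₁ |y_λ(x)|²). -/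
open Set

/-- Chain rule along the graph of a function, for a function of two real variables. -/
lemma hasDerivAt_graph {G : ℝ → ℝ → ℝ} {u : ℝ → ℝ} {a b d x : ℝ}
    (hG : HasFDerivAt (fun p : ℝ × ℝ => G p.1 p.2)
        (a • ContinuousLinearMap.fst ℝ ℝ ℝ + b • ContinuousLinearMap.snd ℝ ℝ ℝ) (x, u x))
    (hu : HasDerivAt u d x) : HasDerivAt (fun t => G t (u t)) (a + b * d) x := by
  have h1 : HasDerivAt (fun t : ℝ => (t, u t)) ((1 : ℝ), d) x := (hasDerivAt_id x).prodMk hu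
  have h2 := HasFDerivAt.comp_hasDerivAt x (f := fun t : ℝ => (t, u t)) hG h1
  simpa [Function.comp_def] using h2

/-- A function vanishing on an open set has zero derivative there. -/
lemma deriv_zero_of_open {U : Set ℝ} (hU : IsOpen U) {g : ℝ → ℝ} {x c : ℝ} (hx : x ∈ U)
    (h0 : ∀ t ∈ U, g t = 0) (hg : HasDerivAt g c x) : c = 0 := by
  have : HasDerivAt g 0 x := (hasDerivAt_const x (0 : ℝ)).congr_of_eventuallyEq (by
    filter_upwards [hU.mem_nhds hx] with t ht using h0 t ht)
  exact hg.unique this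

/-- If `a + b * d = 0` with `|b| ≥ 1 / M`, then `|d| ≤ M * |a|`. -/
lemma abs_le_of_lin {a b d M : ℝ} (hM : 0 < M) (hb : 1 / M ≤ |b|) (h : a + b * d = 0) :
    |d| ≤ M * |a| := by
  have h1 : |a| = |b| * |d| := by
    rw [← abs_mul, ← abs_neg a]; congr 1; linarith
  have h2 : 1 ≤ M * |b| := by
    rw [div_le_iff₀ hM] at hb; linarith
  rw [h1]
  nlinarith [abs_nonneg d]

/-- **Uniform derivative bounds for implicitly defined functions.**
Let `Λ` be a nonempty set, `U, V ⊆ ℝ` open, and for each `λ ∈ Λ` let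
`F_λ : U × V → ℝ` and `y_λ : U → V` be twice continuously differentiable with
`F_λ(x, y_λ(x)) = 0` on `U`.  If `|∂F/∂x|, |∂²F/∂x²| ≤ M₀ + M₁|y|`,
`|∂²F/∂x∂y|, |∂²F/∂y²| ≤ M₀` and `|∂F/∂y| ≥ 1/M₀` uniformly, then there is `M̃ > 0` with
`|y_λ'(x)| ≤ M̃(1 + M₁|y_λ(x)|)` and `|y_λ''(x)| ≤ M̃(1 + M₁|y_λ(x)| + M₁|y_λ(x)|²)`. -/
theorem implicit_function_bounds
    {Λ : Type*} [Nonempty Λ]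
    (U V : Set ℝ) (hUopen : IsOpen U) (hVopen : IsOpen V)
    (F Fx Fy Fxx Fxy Fyy : Λ → ℝ → ℝ → ℝ)
    (y y' y'' : Λ → ℝ → ℝ)
    (M₀ M₁ : ℝ) (hM₀ : 1 < M₀) (hM₁ : 0 ≤ M₁)
    (hymem : ∀ l : Λ, ∀ x ∈ U, y l x ∈ V)
    (hy1 : ∀ l : Λ, ∀ x ∈ U, HasDerivAt (y l) (y' l x) x)
    (hy2 : ∀ l : Λ, ∀ x ∈ U, HasDerivAt (y' l) (y'' l x) x)
    (hy2cont : ∀ l : Λ, ContinuousOn (y'' l) U)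
    (hFzero : ∀ l : Λ, ∀ x ∈ U, F l x (y l x) = 0)
    (hF1 : ∀ l : Λ, ∀ x ∈ U, ∀ v ∈ V,
      HasFDerivAt (fun p : ℝ × ℝ => F l p.1 p.2)
        (Fx l x v • ContinuousLinearMap.fst ℝ ℝ ℝ
          + Fy l x v • ContinuousLinearMap.snd ℝ ℝ ℝ) (x, v))
    (hF2x : ∀ l : Λ, ∀ x ∈ U, ∀ v ∈ V,
      HasFDerivAt (fun p : ℝ × ℝ => Fx l p.1 p.2)
        (Fxx l x v • ContinuousLinearMap.fst ℝ ℝ ℝ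
          + Fxy l x v • ContinuousLinearMap.snd ℝ ℝ ℝ) (x, v))
    (hF2y : ∀ l : Λ, ∀ x ∈ U, ∀ v ∈ V,
      HasFDerivAt (fun p : ℝ × ℝ => Fy l p.1 p.2)
        (Fxy l x v • ContinuousLinearMap.fst ℝ ℝ ℝ
          + Fyy l x v • ContinuousLinearMap.snd ℝ ℝ ℝ) (x, v))
    (hF2cont : ∀ l : Λ, ∀ g ∈ [Fxx l, Fxy l, Fyy l],
      ContinuousOn (fun p : ℝ × ℝ => g p.1 p.2) (U ×ˢ V))
    (hFx : ∀ l : Λ, ∀ x ∈ U, ∀ v ∈ V, |Fx l x v| ≤ M₀ + M₁ * |v|)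
    (hFxx : ∀ l : Λ, ∀ x ∈ U, ∀ v ∈ V, |Fxx l x v| ≤ M₀ + M₁ * |v|)
    (hFxy : ∀ l : Λ, ∀ x ∈ U, ∀ v ∈ V, |Fxy l x v| ≤ M₀)
    (hFyy : ∀ l : Λ, ∀ x ∈ U, ∀ v ∈ V, |Fyy l x v| ≤ M₀)
    (hFy : ∀ l : Λ, ∀ x ∈ U, ∀ v ∈ V, 1 / M₀ ≤ |Fy l x v|) :
    ∃ M > (0:ℝ), ∀ l : Λ, ∀ x ∈ U,
      |y' l x| ≤ M * (1 + M₁ * |y l x|) ∧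
      |y'' l x| ≤ M * (1 + M₁ * |y l x| + M₁ * |y l x| ^ 2) := by
  have hM : 0 < M₀ := by linarith
  refine ⟨M₀ ^ 6 * (5 + M₁), by positivity, fun l x hx => ?_⟩
  have e1 : ∀ t ∈ U, Fx l t (y l t) + Fy l t (y l t) * y' l t = 0 := fun t ht =>
    deriv_zero_of_open hUopen ht (hFzero l)
      (hasDerivAt_graph (hF1 l t ht _ (hymem l t ht)) (hy1 l t ht))
  have hv := hymem l x hx
  have e2 := deriv_zero_of_open hUopen hx e1
    ((hasDerivAt_graph (hF2x l x hx _ hv) (hy1 l x hx)).add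
      ((hasDerivAt_graph (hF2y l x hx _ hv) (hy1 l x hx)).mul (hy2 l x hx)))
  have e3 : (Fxx l x (y l x) + 2 * (Fxy l x (y l x) * y' l x) + Fyy l x (y l x) * y' l x ^ 2)
      + Fy l x (y l x) * y'' l x = 0 := by linarith
  have b1 := abs_le_of_lin hM (hFy l x hx _ hv) (e1 x hx)
  have b2 := abs_le_of_lin hM (hFy l x hx _ hv) e3
  have c1 := hFx l x hx _ hv
  have c2 := hFxx l x hx _ hv
  have c3 := hFxy l x hx _ hv
  have c4 := hFyy l x hx _ hv
  have ht := abs_nonneg (y l x)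
  generalize |y l x| = t at *
  have hs : 0 ≤ M₁ * t := by positivity
  have hs2 : 0 ≤ M₁ * t ^ 2 := by positivity
  have k0 : M₀ + M₁ * t ≤ M₀ * (1 + M₁ * t) := by nlinarith
  have k1 : |y' l x| ≤ M₀ ^ 2 * (1 + M₁ * t) := by
    calc |y' l x| ≤ M₀ * (M₀ * (1 + M₁ * t)) := b1.trans (by gcongr; linarith)
      _ = _ := by ring
  have p2 : M₀ ^ 2 ≤ M₀ ^ 6 := pow_le_pow_right₀ hM₀.le (by norm_num)
  have p4 : M₀ ^ 4 ≤ M₀ ^ 6 := pow_le_pow_right₀ hM₀.le (by norm_num)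
  constructor
  · refine k1.trans ?_
    gcongr
    nlinarith [pow_pos hM 6]
  · have q1 : |Fxy l x (y l x) * y' l x| ≤ M₀ * (M₀ ^ 2 * (1 + M₁ * t)) := by
      rw [abs_mul]; gcongr
    have q2 : |Fyy l x (y l x) * y' l x ^ 2| ≤ M₀ * (M₀ ^ 2 * (1 + M₁ * t)) ^ 2 := by
      rw [abs_mul, abs_pow]; gcongr
    have q3 : |Fxx l x (y l x) + 2 * (Fxy l x (y l x) * y' l x) + Fyy l x (y l x) * y' l x ^ 2|
        ≤ M₀ * (1 + M₁ * t) + 2 * (M₀ * (M₀ ^ 2 * (1 + M₁ * t)))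
          + M₀ * (M₀ ^ 2 * (1 + M₁ * t)) ^ 2 := by
      refine (abs_add_three _ _ _).trans ?_
      rw [abs_mul 2, abs_two]
      linarith
    have q4 : (1 + M₁ * t) ^ 2 ≤ (2 + M₁) * (1 + M₁ * t + M₁ * t ^ 2) := by
      nlinarith [mul_nonneg hM₁ hs]
    calc |y'' l x| ≤ M₀ * (M₀ * (1 + M₁ * t) + 2 * (M₀ * (M₀ ^ 2 * (1 + M₁ * t)))
          + M₀ * (M₀ ^ 2 * (1 + M₁ * t)) ^ 2) := b2.trans (by gcongr)
      _ = M₀ ^ 2 * (1 + M₁ * t) + 2 * (M₀ ^ 4 * (1 + M₁ * t)) + M₀ ^ 6 * (1 + M₁ * t) ^ 2 := by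
        ring
      _ ≤ M₀ ^ 6 * (1 + M₁ * t + M₁ * t ^ 2) + 2 * (M₀ ^ 6 * (1 + M₁ * t + M₁ * t ^ 2))
          + M₀ ^ 6 * ((2 + M₁) * (1 + M₁ * t + M₁ * t ^ 2)) := by
        have q5 : 1 + M₁ * t ≤ 1 + M₁ * t + M₁ * t ^ 2 := by linarith
        have r1 := mul_le_mul p2 q5 (by positivity) (by positivity)
        have r2 := mul_le_mul p4 q5 (by positivity) (by positivity)
        have r3 := mul_le_mul_of_nonneg_left q4 (pow_pos hM 6).le
        linarith
      _ = M₀ ^ 6 * (5 + M₁) * (1 + M₁ * t + M₁ * t ^ 2) := by ring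
end

section
/- First-order expansion of the indifference ask price: if p : (0,ψ₀) → ℝ satisfies U(x₀) = v(x₀ + p(ψ) − V̄, ψ) for all ψ ∈ (0,ψ₀) and p(ψ) → V̄ as ψ ↓ 0, then p(ψ) = V̄ + w̃ ψ + o(ψ) as ψ ↓ 0, i.e. (p(ψ) − V̄ − w̃ψ)/ψ → 0 as ψ ↓ 0. -/
open Set Filter

/-- **First-order expansion of the indifference ask price.**
Let `U` be `C¹` with `U' > 0`, and suppose the value function `v` admits the uniform
first-order expansion `v(y,ψ) = U(y) - U'(y) W(y) ψ + o(ψ)` on an open interval `I ∋ x₀`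
with `W` continuous and `W(x₀) = w̃`.  If `p : (0,ψ₀) → ℝ` satisfies
`U(x₀) = v(x₀ + p(ψ) - V̄, ψ)` and `p(ψ) → V̄` as `ψ ↓ 0`, then
`p(ψ) = V̄ + w̃ ψ + o(ψ)`, i.e. `(p(ψ) - V̄ - w̃ ψ)/ψ → 0` as `ψ ↓ 0`. -/
theorem ask_price_expansion
    (U U1 : ℝ → ℝ) (hU1 : ∀ y, HasDerivAt U (U1 y) y)
    (hU1cont : Continuous U1) (hU1pos : ∀ y, 0 < U1 y)
    (x₀ Vb wt ψ₀ : ℝ) (hψ₀ : 0 < ψ₀)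
    (v : ℝ → ℝ → ℝ)
    (a b : ℝ) (hax : a < x₀) (hxb : x₀ < b)
    (W : ℝ → ℝ) (hW : ContinuousOn W (Ioo a b)) (hWx₀ : W x₀ = wt)
    (hv : ∀ δ > (0:ℝ), ∃ η > (0:ℝ), ∀ ψ : ℝ, 0 < ψ → ψ < η → ψ < ψ₀ →
      ∀ y ∈ Ioo a b, |v y ψ - (U y - U1 y * W y * ψ)| ≤ δ * ψ)
    (p : ℝ → ℝ)
    (hp : ∀ ψ ∈ Ioo (0:ℝ) ψ₀, U x₀ = v (x₀ + p ψ - Vb) ψ)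
    (hplim : Tendsto p (nhdsWithin 0 (Ioi 0)) (nhds Vb)) :
    Tendsto (fun ψ => (p ψ - Vb - wt * ψ) / ψ) (nhdsWithin 0 (Ioi 0)) (nhds 0) := by
  set y : ℝ → ℝ := fun ψ => x₀ + p ψ - Vb with hy
  have hylim : Tendsto y (nhdsWithin 0 (Ioi 0)) (nhds x₀) := by
    have h := (hplim.const_add x₀).sub_const Vb
    simpa using h
  have hyI : ∀ᶠ ψ in nhdsWithin (0:ℝ) (Ioi 0), y ψ ∈ Ioo a b :=
    hylim.eventually (Ioo_mem_nhds hax hxb)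
  have hWlim : Tendsto (fun ψ => W (y ψ)) (nhdsWithin 0 (Ioi 0)) (nhds wt) := by
    have h := (hW.continuousAt (Ioo_mem_nhds hax hxb)).tendsto.comp hylim
    rwa [hWx₀] at h
  have hUlim : Tendsto (fun ψ => U1 (y ψ)) (nhdsWithin 0 (Ioi 0)) (nhds (U1 x₀)) :=
    (hU1cont.tendsto x₀).comp hylim
  have hq : Tendsto (fun ψ => dslope U x₀ (y ψ)) (nhdsWithin 0 (Ioi 0)) (nhds (U1 x₀)) := by
    have h := (continuousAt_dslope_same.2 (hU1 x₀).differentiableAt).tendsto.comp hylim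
    rwa [dslope_same, (hU1 x₀).deriv] at h
  have herr : Tendsto (fun ψ => (U (y ψ) - U x₀) / ψ - U1 (y ψ) * W (y ψ))
      (nhdsWithin 0 (Ioi 0)) (nhds 0) := by
    rw [Metric.tendsto_nhds]
    intro ε hε
    obtain ⟨η, hη, h⟩ := hv (ε / 2) (by positivity)
    have hs : ∀ᶠ ψ in nhdsWithin (0:ℝ) (Ioi 0), ψ ∈ Ioo (0:ℝ) (min η ψ₀) :=
      Ioo_mem_nhdsGT (lt_min hη hψ₀)
    filter_upwards [hs, hyI] with ψ hψ hyψ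
    have h0 : 0 < ψ := hψ.1
    have h1 : ψ < η := hψ.2.trans_le (min_le_left _ _)
    have h2 : ψ < ψ₀ := hψ.2.trans_le (min_le_right _ _)
    have h3 := h ψ h0 h1 h2 (y ψ) hyψ
    have h4 : U x₀ = v (y ψ) ψ := hp ψ ⟨h0, h2⟩
    rw [← h4, abs_sub_comm] at h3
    have h5 : (U (y ψ) - U x₀) / ψ - U1 (y ψ) * W (y ψ)
        = (U (y ψ) - U1 (y ψ) * W (y ψ) * ψ - U x₀) / ψ := by
      field_simp
      ring
    rw [Real.dist_eq, sub_zero, h5, abs_div, abs_of_pos h0, div_lt_iff₀ h0]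
    nlinarith [mul_pos hε h0]
  have hmain : Tendsto (fun ψ => (U (y ψ) - U x₀) / ψ)
      (nhdsWithin 0 (Ioi 0)) (nhds (U1 x₀ * wt)) := by
    have h := herr.add (hUlim.mul hWlim)
    simpa using h
  have hfin := (hmain.div hq (hU1pos x₀).ne').sub_const wt
  rw [mul_div_cancel_left₀ _ (hU1pos x₀).ne', sub_self] at hfin
  refine hfin.congr' ?_
  filter_upwards [hq.eventually_ne (hU1pos x₀).ne', self_mem_nhdsWithin] with ψ hne hψ
  have h0 : ψ ≠ 0 := ne_of_gt hψ
  have h1 : (y ψ - x₀) * dslope U x₀ (y ψ) = U (y ψ) - U x₀ := sub_smul_dslope U x₀ (y ψ)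
  have h2 : p ψ - Vb = y ψ - x₀ := by simp only [hy]; ring
  simp only [Pi.div_apply]
  rw [h2, ← h1]
  field_simp
end

section
/- First-order expansion of the indifference bid price: if p : (0,ψ₀) → ℝ satisfies U(x₀) = v(x₀ − p(ψ) + V̄, ψ) for all ψ ∈ (0,ψ₀) and p(ψ) → V̄ as ψ ↓ 0, then p(ψ) = V̄ − w̃ ψ + o(ψ) as ψ ↓ 0, i.e. (p(ψ) − V̄ + w̃ψ)/ψ → 0 as ψ ↓ 0; in particular, together with the corresponding ask price p_a satisfying U(x₀) = v(x₀ + p_a(ψ) − V̄, ψ) and p_a(ψ) → V̄, the bid–ask spread satisfies p_a(ψ) − p(ψ) = 2 w̃ ψ + o(ψ). -/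
open Set Filter

lemma shift_expansion
    (U U1 : ℝ → ℝ) (hU1 : ∀ y, HasDerivAt U (U1 y) y)
    (hU1cont : Continuous U1) (hU1pos : ∀ y, 0 < U1 y)
    (x₀ wt ψ₀ : ℝ) (hψ₀ : 0 < ψ₀)
    (v : ℝ → ℝ → ℝ)
    (a b : ℝ) (hax : a < x₀) (hxb : x₀ < b)
    (W : ℝ → ℝ) (hW : ContinuousOn W (Ioo a b)) (hWx₀ : W x₀ = wt)
    (hv : ∀ δ > (0:ℝ), ∃ η > (0:ℝ), ∀ ψ : ℝ, 0 < ψ → ψ < η → ψ < ψ₀ →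
      ∀ y ∈ Ioo a b, |v y ψ - (U y - U1 y * W y * ψ)| ≤ δ * ψ)
    (y : ℝ → ℝ) (hy : ∀ ψ ∈ Ioo (0:ℝ) ψ₀, U x₀ = v (y ψ) ψ)
    (hlim : Tendsto y (nhdsWithin 0 (Ioi 0)) (nhds x₀)) :
    Tendsto (fun ψ => (y ψ - x₀) / ψ) (nhdsWithin 0 (Ioi 0)) (nhds wt) := by
  have hg : Tendsto (fun ψ => dslope U x₀ (y ψ)) (nhdsWithin 0 (Ioi 0)) (nhds (U1 x₀)) := by
    have h1 : ContinuousAt (dslope U x₀) x₀ :=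
      continuousAt_dslope_same.2 (hU1 x₀).differentiableAt
    have h2 := h1.tendsto.comp hlim
    rwa [dslope_same, (hU1 x₀).deriv] at h2
  have hI : ∀ᶠ ψ in nhdsWithin 0 (Ioi 0), y ψ ∈ Ioo a b :=
    hlim.eventually (Ioo_mem_nhds hax hxb)
  have hWl : Tendsto (fun ψ => W (y ψ)) (nhdsWithin 0 (Ioi 0)) (nhds wt) := by
    have h1 := (hW.continuousAt (Ioo_mem_nhds hax hxb)).tendsto.comp hlim
    rwa [hWx₀] at h1
  have hUl : Tendsto (fun ψ => U1 (y ψ)) (nhdsWithin 0 (Ioi 0)) (nhds (U1 x₀)) :=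
    (hU1cont.tendsto x₀).comp hlim
  have he : Tendsto (fun ψ => (v (y ψ) ψ - (U (y ψ) - U1 (y ψ) * W (y ψ) * ψ)) / ψ)
      (nhdsWithin 0 (Ioi 0)) (nhds 0) := by
    rw [Metric.tendsto_nhds]
    intro ε hε
    obtain ⟨η, hη, h⟩ := hv (ε / 2) (by positivity)
    filter_upwards [hI, Ioo_mem_nhdsGT hη, Ioo_mem_nhdsGT hψ₀] with ψ h1 h2 h3
    have h4 := h ψ h2.1 h2.2 h3.2 _ h1
    rw [Real.dist_eq, sub_zero, abs_div, abs_of_pos h2.1, div_lt_iff₀ h2.1]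
    have := mul_pos hε h2.1
    linarith
  have hfin := ((hUl.mul hWl).sub he).div hg (hU1pos x₀).ne'
  rw [sub_zero, mul_div_cancel_left₀ _ (hU1pos x₀).ne'] at hfin
  refine hfin.congr' ?_
  filter_upwards [hg.eventually_ne (hU1pos x₀).ne', Ioo_mem_nhdsGT hψ₀] with ψ h1 h2
  have h3 : (y ψ - x₀) * dslope U x₀ (y ψ) = U (y ψ) - U x₀ := by
    simpa using sub_smul_dslope U x₀ (y ψ)
  have h4 := h2.1.ne'
  simp only [Pi.div_apply]
  rw [← hy ψ h2, div_eq_div_iff h1 h4, h3]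
  field_simp
  ring

/-- **First-order expansion of the indifference bid price (and of the bid–ask spread).**
Let `U` be `C¹` with `U' > 0`, and suppose the value function `v` admits the uniform
first-order expansion `v(y,ψ) = U(y) - U'(y) W(y) ψ + o(ψ)` on an open interval `I ∋ x₀`
with `W` continuous and `W(x₀) = w̃`.  If `p : (0,ψ₀) → ℝ` satisfies
`U(x₀) = v(x₀ - p(ψ) + V̄, ψ)` and `p(ψ) → V̄` as `ψ ↓ 0`, then
`p(ψ) = V̄ - w̃ ψ + o(ψ)`; moreover, together with the ask price `p_a` satisfying
`U(x₀) = v(x₀ + p_a(ψ) - V̄, ψ)` and `p_a(ψ) → V̄`, the bid–ask spread satisfies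
`p_a(ψ) - p(ψ) = 2 w̃ ψ + o(ψ)`. -/
theorem bid_price_expansion
    (U U1 : ℝ → ℝ) (hU1 : ∀ y, HasDerivAt U (U1 y) y)
    (hU1cont : Continuous U1) (hU1pos : ∀ y, 0 < U1 y)
    (x₀ Vb wt ψ₀ : ℝ) (hψ₀ : 0 < ψ₀)
    (v : ℝ → ℝ → ℝ)
    (a b : ℝ) (hax : a < x₀) (hxb : x₀ < b)
    (W : ℝ → ℝ) (hW : ContinuousOn W (Ioo a b)) (hWx₀ : W x₀ = wt)
    (hv : ∀ δ > (0:ℝ), ∃ η > (0:ℝ), ∀ ψ : ℝ, 0 < ψ → ψ < η → ψ < ψ₀ →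
      ∀ y ∈ Ioo a b, |v y ψ - (U y - U1 y * W y * ψ)| ≤ δ * ψ)
    (p pa : ℝ → ℝ)
    (hp : ∀ ψ ∈ Ioo (0:ℝ) ψ₀, U x₀ = v (x₀ - p ψ + Vb) ψ)
    (hplim : Tendsto p (nhdsWithin 0 (Ioi 0)) (nhds Vb))
    (hpa : ∀ ψ ∈ Ioo (0:ℝ) ψ₀, U x₀ = v (x₀ + pa ψ - Vb) ψ)
    (hpalim : Tendsto pa (nhdsWithin 0 (Ioi 0)) (nhds Vb)) :
    Tendsto (fun ψ => (p ψ - Vb + wt * ψ) / ψ) (nhdsWithin 0 (Ioi 0)) (nhds 0) ∧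
    Tendsto (fun ψ => (pa ψ - p ψ - 2 * wt * ψ) / ψ) (nhdsWithin 0 (Ioi 0)) (nhds 0) := by
  have key := shift_expansion U U1 hU1 hU1cont hU1pos x₀ wt ψ₀ hψ₀ v a b hax hxb W hW hWx₀ hv
  have h1 := key (fun ψ => x₀ - p ψ + Vb) hp (by
    have := (hplim.const_sub x₀).add_const Vb
    rwa [sub_add_cancel] at this)
  have h2 := key (fun ψ => x₀ + pa ψ - Vb) hpa (by
    have := (hpalim.const_add x₀).sub_const Vb
    rwa [add_sub_cancel_right] at this)
  constructor
  · have h := h1.const_sub wt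
    rw [sub_self] at h
    refine h.congr' ?_
    filter_upwards [self_mem_nhdsWithin] with ψ hψ
    have : ψ ≠ 0 := ne_of_gt hψ
    field_simp
    ring
  · have h := (h1.add h2).sub_const (2 * wt)
    rw [show wt + wt - 2 * wt = 0 by ring] at h
    refine h.congr' ?_
    filter_upwards [self_mem_nhdsWithin] with ψ hψ
    have : ψ ≠ 0 := ne_of_gt hψ
    field_simp
    ring
end
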